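/- For every maximal cap S in AG(4,3), the point a = −∑_{x∈S} x does not lie in S, and for every x ∈ S the point −(a + x) lies in S and is different from x (so S consists of 10 pairs of points each of which forms a line with a). Moreover a is the unique point of AG(4,3) with this property; it is called the anchor of S. -/

import Mathlib

/-- A cap in `AG(n,3)`: a finite set of points of `Fin n → ZMod 3` containing no
three distinct collinear points (three distinct points are collinear iff they sum to zero). -/
def IsCap {n : ℕ} (C : Finset (Fin n → ZMod 3)) : Prop :=
  ∀ x ∈ C, ∀ y ∈ C, ∀ z ∈ C, x ≠ y → x ≠ z → y ≠ z → x + y + z ≠ 0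

/-- A maximal cap: a cap of largest possible size. -/
def MaximalCap {n : ℕ} (C : Finset (Fin n → ZMod 3)) : Prop :=
  IsCap C ∧ ∀ D : Finset (Fin n → ZMod 3), IsCap D → D.card ≤ C.card

/-- Packed table of the third point on a line of AG(3,3). -/
def capTab : ℕ := 150284565616056763424795829705389756120251294006712634846115618033434350366027011625804797925767743525857091357550117053530807438228182543595331057665543666992978261233185756360808658228667194250683078014022553323338965623567872818370490658670637729796339420589904614080483031792287466011382029193134820904130723559090780210590735837578530134830151446832098083693935819792378068315219212393196646776840963018407869016989297472929219519962518228599846451766284308508773668620039913519221816709663884159537274227289273817357320550526958471401535543944266824532352409190872190530718151643274753432484913454339853488252574394268903122173990901243772210754349162345037285333370458508444394969402348539644334191951505111956980413181496210644656095070087626897703824268664482009624069007744063319957743183576251125596711856050993935868646997683662293243282239401672182611864858110407964312324147192494921648244043677080123448615273851580966251792771734764002160312867627998824753275932706610797002372287009071681916409479712883366034715985325703414262430314847756274864081793451161363173692345587589121088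

/-- Code of the third point of the line through the points with codes `p`, `q`. -/
def third (p q : ℕ) : ℕ :=
  Nat.add (Nat.mul 27 (Nat.mod (Nat.sub 6 (Nat.add (Nat.div p 27) (Nat.div q 27))) 3))
    (Nat.land 31 (Nat.shiftRight capTab
      (Nat.mul 5 (Nat.add (Nat.mul 27 (Nat.mod p 27)) (Nat.mod q 27)))))

/-- Call `k` on `n`, forcing the evaluation of `n` first. -/
def force {α : Type} (n : ℕ) (k : ℕ → α) : α :=
  Nat.rec (k 0) (fun m _ => k (Nat.succ m)) n

/-- Bit mask of the points excluded by adding `p` to `I`. -/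
def killMask (p : ℕ) (I : List ℕ) : ℕ :=
  List.rec 0 (fun q _ ih => Nat.lor ih (Nat.shiftLeft 1 (third p q))) I

/-- Strict filter (with accumulator and continuation): drop the elements in the mask `D`. -/
def flt {α : Type} (D : ℕ) (l : List ℕ) : List ℕ → (List ℕ → α) → α :=
  List.rec (fun acc k => k acc)
    (fun r _ ih acc k => Bool.rec (ih acc k) (ih (r :: acc) k)
      (Nat.beq (Nat.land 1 (Nat.shiftRight D r)) 0)) l

/-- Exhaustive search. -/
def go (leaf : List ℕ → List ℕ → List ℕ → Bool) (n : ℕ) :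
    List ℕ → List ℕ → List ℕ → Bool :=
  Nat.rec (fun _ _ _ => false)
    (fun _ ih I U1 U2 =>
      Bool.rec
        (List.rec
          (List.rec false
            (fun p ps _ => Bool.rec false (ih I [] ps)
              (force (killMask p I) fun D => flt D ps [] fun ps' => ih (p :: I) [] ps')) U2)
          (fun p ps _ => Bool.rec false (ih I ps U2)
              (force (killMask p I) fun D => flt D ps [] fun ps' =>
                flt D U2 [] fun us => ih (p :: I) ps' us)) U1)
        true (leaf I U1 U2)) n

/-- Put the points of `F` into the chosen set, then continue. -/
def start {α : Type} (F : List ℕ) : List ℕ → List ℕ → List ℕ →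
    (List ℕ → List ℕ → List ℕ → α) → α :=
  List.rec (fun I U1 U2 k => k I U1 U2)
    (fun p _ ih I U1 U2 k => force (killMask p I) fun D =>
      flt D U1 [] fun u1 => flt D U2 [] fun u2 => ih (p :: I) u1 u2 k) F

/-- Number of elements of `l` in `[a, b)`. -/
def cnt (a b : ℕ) (l : List ℕ) : ℕ :=
  List.rec 0 (fun q _ ih => Bool.rec ih (Bool.rec (Nat.succ ih) ih (Nat.ble b q)) (Nat.ble a q)) l

/-- Boolean membership. -/
def memb (x : ℕ) (l : List ℕ) : Bool :=
  List.rec false (fun q _ ih => Bool.rec ih true (Nat.beq x q)) l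

/-- Anchor test. -/
def isAnchor (I : List ℕ) (a : ℕ) : Bool :=
  (!(memb a I)) && I.all fun x => memb (third a x) I

/-- Minimum with 9. -/
def min9 (n : ℕ) : ℕ := Bool.rec n 9 (Nat.ble 9 n)

/-- Pruning and leaf test for the search of 20-caps in dimension 4. -/
def leaf3 (I U1 U2 : List ℕ) : Bool :=
  force (Nat.add (cnt 27 54 I) U1.length) fun c =>
  force (Nat.add (cnt 54 81 I) U2.length) fun b =>
    Bool.rec true
      (Bool.rec true
        (U1.isEmpty && (U2.isEmpty && (List.range 81).any (isAnchor I)))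
        (Nat.ble 11 (Nat.add (min9 b) (min9 c))))
      (Nat.ble 6 b)

/-- Code of the sum of two points. -/
def addc (p q : ℕ) : ℕ := third (third p q) 0

/-- Code of the negative of a point. -/
def negc (p : ℕ) : ℕ := third p 0

/-- The points with codes `0, 1, p, q` are an affine frame of the hyperplane of codes below 27
in which `I` contains the standard 9-cap. -/
def canonAt (I : List ℕ) (p q : ℕ) : Bool :=
  (!(memb p [0, 1, 2])) &&
  ((!(memb q [0, 1, 2, p, addc p 1, addc p 2, negc p, addc (negc p) 1, addc (negc p) 2])) &&
  ([addc q (negc p), addc (addc q (negc p)) 1, addc (negc q) 1, addc (third q p) 1,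
    addc (third q p) 2].all fun x => memb x I))

/-- Pruning and leaf test for the search of 9-caps in dimension 3. -/
def leaf2 (I U1 U2 : List ℕ) : Bool :=
  Bool.rec true
    (U1.isEmpty && (U2.isEmpty && (Nat.beq I.length 9 &&
      I.any fun p => I.any fun q => canonAt I p q)))
    (Nat.ble 9 (Nat.add I.length (Nat.add U1.length U2.length)))

theorem search3 : start [0, 1, 3, 9, 15, 16, 19, 25, 26, 27] [] (List.range' 28 26)
    (List.range' 54 27) (go leaf3 81) = true := by decide +kernel

theorem search2 : start [0, 1, 3, 9] [] ([2, 4, 5, 6, 7, 8] ++ List.range' 10 17) [] (go leaf2 81) = true := by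
  decide +kernel

theorem third_table : ((List.range 81).all fun p => (List.range 81).all fun q =>
    Nat.ble (third p q) 80 &&
    Nat.beq ((third p q / 27 + p / 27 + q / 27) % 3) 0 &&
    Nat.beq ((third p q / 9 + p / 9 + q / 9) % 3) 0 &&
    Nat.beq ((third p q / 3 + p / 3 + q / 3) % 3) 0 &&
    Nat.beq ((third p q + p + q) % 3) 0) = true := by decide +kernel

/-! ### Soundness of the search -/

theorem force_eq {α : Type} (n : ℕ) (k : ℕ → α) : force n k = k n := by
  cases n <;> rfl

theorem flt_spec {α : Type} (D : ℕ) (l : List ℕ) : ∀ (acc : List ℕ) (k : List ℕ → α),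
    ∃ l', flt D l acc k = k l' ∧ ∀ x, x ∈ l' ↔ (x ∈ acc ∨ (x ∈ l ∧ D.testBit x = false)) := by
  induction l with
  | nil => intro acc k; exact ⟨acc, rfl, by simp⟩
  | cons r l ih =>
    intro acc k
    have hb : Nat.beq (Nat.land 1 (Nat.shiftRight D r)) 0 = !(D.testBit r) := by
      have : D.testBit r = (Nat.land 1 (Nat.shiftRight D r) != 0) := rfl
      rw [this]
      cases h : Nat.beq (Nat.land 1 (Nat.shiftRight D r)) 0
      · have := Nat.ne_of_beq_eq_false h
        rw [bne_iff_ne.2 this]; rfl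
      · have := Nat.eq_of_beq_eq_true h
        rw [this]; rfl
    have hstep : flt D (r :: l) acc k =
        Bool.rec (flt D l acc k) (flt D l (r :: acc) k)
          (Nat.beq (Nat.land 1 (Nat.shiftRight D r)) 0) := rfl
    rw [hstep, hb]
    cases h : D.testBit r
    · obtain ⟨l', h1, h2⟩ := ih (r :: acc) k
      refine ⟨l', h1, fun x => ?_⟩
      rw [h2]
      constructor
      · rintro (hx | hx)
        · rcases List.mem_cons.1 hx with rfl | hx
          · exact Or.inr ⟨by simp, h⟩
          · exact Or.inl hx
        · exact Or.inr ⟨by simp [hx.1], hx.2⟩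
      · rintro (hx | ⟨hx, hx'⟩)
        · exact Or.inl (by simp [hx])
        · rcases List.mem_cons.1 hx with rfl | hx
          · exact Or.inl (by simp)
          · exact Or.inr ⟨hx, hx'⟩
    · obtain ⟨l', h1, h2⟩ := ih acc k
      refine ⟨l', h1, fun x => ?_⟩
      rw [h2]
      constructor
      · rintro (hx | hx)
        · exact Or.inl hx
        · exact Or.inr ⟨by simp [hx.1], hx.2⟩
      · rintro (hx | ⟨hx, hx'⟩)
        · exact Or.inl hx
        · rcases List.mem_cons.1 hx with rfl | hx
          · rw [h] at hx'; cases hx'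
          · exact Or.inr ⟨hx, hx'⟩

theorem killMask_spec (p : ℕ) (I : List ℕ) (x : ℕ) (h : (killMask p I).testBit x = true) :
    ∃ q ∈ I, third p q = x := by
  induction I with
  | nil => 
    have : killMask p [] = 0 := rfl
    simp [this] at h
  | cons q I ih =>
    have hs : killMask p (q :: I) = (killMask p I) ||| (1 <<< (third p q)) := rfl
    rw [hs, Nat.testBit_or, Bool.or_eq_true] at h
    rcases h with h | h
    · obtain ⟨q', hq', e⟩ := ih h
      exact ⟨q', by simp [hq'], e⟩
    · refine ⟨q, by simp, ?_⟩
      rw [Nat.one_shiftLeft, Nat.testBit_two_pow] at h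
      simpa using h

/-- The code version of a cap. -/
def CodeCap (S : Finset ℕ) : Prop :=
  (∀ p ∈ S, p < 81) ∧ ∀ p ∈ S, ∀ q ∈ S, p ≠ q → third p q ∉ S

/-- Search invariant. -/
def CapInv (S : Finset ℕ) (I U1 U2 : List ℕ) : Prop :=
  (∀ x ∈ I, x ∈ S) ∧ (∀ x ∈ S, x < 54 → x ∈ I ∨ x ∈ U1) ∧
    (∀ x ∈ S, 54 ≤ x → x ∈ I ∨ x ∈ U2)

theorem third_facts (p q : ℕ) (hp : p < 81) (hq : q < 81) :
    third p q < 81 ∧ (third p q / 27 + p / 27 + q / 27) % 3 = 0 ∧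
    (third p q / 9 + p / 9 + q / 9) % 3 = 0 ∧ (third p q / 3 + p / 3 + q / 3) % 3 = 0 ∧
    (third p q + p + q) % 3 = 0 := by
  have h := third_table
  rw [List.all_eq_true] at h
  have h := h p (List.mem_range.2 hp)
  rw [List.all_eq_true] at h
  have h := h q (List.mem_range.2 hq)
  simp only [Bool.and_eq_true] at h
  obtain ⟨⟨⟨⟨h0, h1⟩, h2⟩, h3⟩, h4⟩ := h
  exact ⟨by have := Nat.le_of_ble_eq_true h0; omega, Nat.eq_of_beq_eq_true h1,
    Nat.eq_of_beq_eq_true h2, Nat.eq_of_beq_eq_true h3, Nat.eq_of_beq_eq_true h4⟩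

theorem third_self (p : ℕ) (hp : p < 81) : third p p = p := by
  obtain ⟨h0, h1, h2, h3, h4⟩ := third_facts p p hp hp
  have e1 : third p p / 27 % 3 = p / 27 % 3 := by clear h2 h3 h4; omega
  have e2 : third p p / 9 % 3 = p / 9 % 3 := by clear h1 h3 h4; omega
  have e3 : third p p / 3 % 3 = p / 3 % 3 := by clear h1 h2 h4; omega
  have e4 : third p p % 3 = p % 3 := by clear h1 h2 h3; omega
  clear h1 h2 h3 h4
  omega

theorem inv_add {S : Finset ℕ} (hS : CodeCap S) {I U1 U2 V1 V2 : List ℕ} {p : ℕ} (hp : p ∈ S)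
    (h : CapInv S I U1 U2)
    (h1 : ∀ x, x ∈ U1 → x = p ∨ (killMask p I).testBit x = true ∨ x ∈ V1)
    (h2 : ∀ x, x ∈ U2 → x = p ∨ (killMask p I).testBit x = true ∨ x ∈ V2) :
    CapInv S (p :: I) V1 V2 := by
  have key : ∀ x ∈ S, (killMask p I).testBit x = true → x = p := by
    intro x hx hk
    obtain ⟨q, hq, e⟩ := killMask_spec _ _ _ hk
    by_cases hpq : p = q
    · subst hpq
      rw [third_self p (hS.1 p hp)] at e
      exact e.symm
    · exact absurd (e ▸ hx) (hS.2 p hp q (h.1 q hq) hpq)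
  refine ⟨?_, ?_, ?_⟩
  · intro x hx
    rcases List.mem_cons.1 hx with rfl | hx
    · exact hp
    · exact h.1 x hx
  · intro x hx hl
    rcases h.2.1 x hx hl with hI | hU
    · exact Or.inl (by simp [hI])
    · rcases h1 x hU with e | hk | hv
      · exact Or.inl (by simp [e])
      · exact Or.inl (by simp [key x hx hk])
      · exact Or.inr hv
  · intro x hx hl
    rcases h.2.2 x hx hl with hI | hU
    · exact Or.inl (by simp [hI])
    · rcases h2 x hU with e | hk | hv
      · exact Or.inl (by simp [e])
      · exact Or.inl (by simp [key x hx hk])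
      · exact Or.inr hv

theorem go_sound (leaf : List ℕ → List ℕ → List ℕ → Bool) (S : Finset ℕ) (hS : CodeCap S)
    (G : Prop) (hleaf : ∀ I U1 U2, leaf I U1 U2 = true → CapInv S I U1 U2 → G) (n : ℕ) :
    ∀ I U1 U2, go leaf n I U1 U2 = true → CapInv S I U1 U2 → G := by
  induction n with
  | zero => intro I U1 U2 h; exact absurd h (by simp [go])
  | succ n ih =>
    intro I U1 U2 h hI
    cases hs : leaf I U1 U2 with
    | true => exact hleaf _ _ _ hs hI
    | false =>
      cases U1 with
      | cons p ps =>
        have e : go leaf (n + 1) I (p :: ps) U2 = Bool.rec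
          (Bool.rec false (go leaf n I ps U2)
              (force (killMask p I) fun D => flt D ps [] fun ps' =>
                flt D U2 [] fun us => go leaf n (p :: I) ps' us)) true
                (leaf I (p :: ps) U2) := rfl
        rw [e, hs, force_eq] at h
        obtain ⟨l1, e1, m1⟩ := flt_spec (killMask p I) ps [] (fun ps' =>
                flt (killMask p I) U2 [] fun us => go leaf n (p :: I) ps' us)
        obtain ⟨l2, e2, m2⟩ := flt_spec (killMask p I) U2 [] (fun us =>
                go leaf n (p :: I) l1 us)
        rw [e1, e2] at h
        cases hg : go leaf n (p :: I) l1 l2 with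
        | false => rw [hg] at h; exact absurd h (by simp)
        | true =>
          rw [hg] at h
          by_cases hp : p ∈ S
          · refine ih _ _ _ hg (inv_add hS hp hI ?_ ?_)
            · intro x hx
              rcases List.mem_cons.1 hx with rfl | hx
              · exact Or.inl rfl
              · by_cases hk : (killMask p I).testBit x = true
                · exact Or.inr (Or.inl hk)
                · exact Or.inr (Or.inr ((m1 x).2 (Or.inr ⟨hx, by simpa using hk⟩)))
            · intro x hx
              by_cases hk : (killMask p I).testBit x = true
              · exact Or.inr (Or.inl hk)
              · exact Or.inr (Or.inr ((m2 x).2 (Or.inr ⟨hx, by simpa using hk⟩)))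
          · refine ih _ _ _ h ⟨hI.1, ?_, hI.2.2⟩
            intro x hx hl
            rcases hI.2.1 x hx hl with hx' | hx'
            · exact Or.inl hx'
            · rcases List.mem_cons.1 hx' with rfl | hx'
              · exact absurd hx hp
              · exact Or.inr hx'
      | nil =>
        cases U2 with
        | nil =>
          have e : go leaf (n + 1) I [] [] = Bool.rec false true (leaf I [] []) := rfl
          rw [e, hs] at h
          exact absurd h (by simp)
        | cons p ps =>
          have e : go leaf (n + 1) I [] (p :: ps) = Bool.rec
            (Bool.rec false (go leaf n I [] ps)
              (force (killMask p I) fun D => flt D ps [] fun ps' => go leaf n (p :: I) [] ps'))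
                true (leaf I [] (p :: ps)) := rfl
          rw [e, hs, force_eq] at h
          obtain ⟨l1, e1, m1⟩ := flt_spec (killMask p I) ps [] (fun ps' =>
                go leaf n (p :: I) [] ps')
          rw [e1] at h
          cases hg : go leaf n (p :: I) [] l1 with
          | false => rw [hg] at h; exact absurd h (by simp)
          | true =>
            rw [hg] at h
            by_cases hp : p ∈ S
            · refine ih _ _ _ hg (inv_add hS hp hI ?_ ?_)
              · intro x hx; simp at hx
              · intro x hx
                rcases List.mem_cons.1 hx with rfl | hx
                · exact Or.inl rfl
                · by_cases hk : (killMask p I).testBit x = true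
                  · exact Or.inr (Or.inl hk)
                  · exact Or.inr (Or.inr ((m1 x).2 (Or.inr ⟨hx, by simpa using hk⟩)))
            · refine ih _ _ _ h ⟨hI.1, hI.2.1, ?_⟩
              intro x hx hl
              rcases hI.2.2 x hx hl with hx' | hx'
              · exact Or.inl hx'
              · rcases List.mem_cons.1 hx' with rfl | hx'
                · exact absurd hx hp
                · exact Or.inr hx'

theorem start_sound (S : Finset ℕ) (hS : CodeCap S) (G : Prop)
    (k : List ℕ → List ℕ → List ℕ → Bool)
    (hk : ∀ I U1 U2, k I U1 U2 = true → CapInv S I U1 U2 → G) (F : List ℕ) :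
    ∀ I U1 U2, (∀ x ∈ F, x ∈ S) → start F I U1 U2 k = true →
      (∀ x ∈ I, x ∈ S) → (∀ x ∈ S, x < 54 → x ∈ F ∨ x ∈ I ∨ x ∈ U1) →
      (∀ x ∈ S, 54 ≤ x → x ∈ F ∨ x ∈ I ∨ x ∈ U2) → G := by
  induction F with
  | nil =>
    intro I U1 U2 _ h a b c
    exact hk _ _ _ h ⟨a, fun x hx hl => by simpa using b x hx hl,
      fun x hx hl => by simpa using c x hx hl⟩
  | cons p F ih =>
    intro I U1 U2 hF h a b c
    have e : start (p :: F) I U1 U2 k = force (killMask p I) fun D =>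
      flt D U1 [] fun u1 => flt D U2 [] fun u2 => start F (p :: I) u1 u2 k := rfl
    rw [e, force_eq] at h
    obtain ⟨l1, e1, m1⟩ := flt_spec (killMask p I) U1 [] (fun u1 =>
      flt (killMask p I) U2 [] fun u2 => start F (p :: I) u1 u2 k)
    obtain ⟨l2, e2, m2⟩ := flt_spec (killMask p I) U2 [] (fun u2 => start F (p :: I) l1 u2 k)
    rw [e1, e2] at h
    have hp : p ∈ S := hF p (by simp)
    have key : ∀ x ∈ S, (killMask p I).testBit x = true → x = p := by
      intro x hx hk
      obtain ⟨q, hq, e⟩ := killMask_spec _ _ _ hk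
      by_cases hpq : p = q
      · subst hpq
        rw [third_self p (hS.1 p hp)] at e
        exact e.symm
      · exact absurd (e ▸ hx) (hS.2 p hp q (a q hq) hpq)
    refine ih (p :: I) l1 l2 (fun x hx => hF x (by simp [hx])) h ?_ ?_ ?_
    · intro x hx
      rcases List.mem_cons.1 hx with rfl | hx
      · exact hp
      · exact a x hx
    · intro x hx hl
      by_cases hk : (killMask p I).testBit x = true
      · exact Or.inr (Or.inl (by simp [key x hx hk]))
      · rcases b x hx hl with h1 | h1 | h1
        · rcases List.mem_cons.1 h1 with rfl | h1
          · exact Or.inr (Or.inl (by simp))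
          · exact Or.inl h1
        · exact Or.inr (Or.inl (by simp [h1]))
        · exact Or.inr (Or.inr ((m1 x).2 (Or.inr ⟨h1, by simpa using hk⟩)))
    · intro x hx hl
      by_cases hk : (killMask p I).testBit x = true
      · exact Or.inr (Or.inl (by simp [key x hx hk]))
      · rcases c x hx hl with h1 | h1 | h1
        · rcases List.mem_cons.1 h1 with rfl | h1
          · exact Or.inr (Or.inl (by simp))
          · exact Or.inl h1
        · exact Or.inr (Or.inl (by simp [h1]))
        · exact Or.inr (Or.inr ((m2 x).2 (Or.inr ⟨h1, by simpa using hk⟩)))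

theorem memb_iff (x : ℕ) (l : List ℕ) : memb x l = true ↔ x ∈ l := by
  induction l with
  | nil => simp [memb]
  | cons q l ih =>
    have e : memb x (q :: l) = Bool.rec (memb x l) true (Nat.beq x q) := rfl
    rw [e, List.mem_cons, ← ih]
    cases h : Nat.beq x q
    · have := Nat.ne_of_beq_eq_false h
      simp [this]
    · have := Nat.eq_of_beq_eq_true h
      simp [this]

theorem memb_false (x : ℕ) (l : List ℕ) : (!(memb x l)) = true ↔ x ∉ l := by
  rw [← memb_iff]; simp

theorem cnt_spec (a b : ℕ) (l : List ℕ) :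
    cnt a b l = (l.filter fun x => decide (a ≤ x ∧ x < b)).length := by
  induction l with
  | nil => rfl
  | cons q l ih =>
    have e : cnt a b (q :: l) = Bool.rec (cnt a b l)
      (Bool.rec (Nat.succ (cnt a b l)) (cnt a b l) (Nat.ble b q)) (Nat.ble a q) := rfl
    rw [e, List.filter_cons, ih]
    have h1 : Nat.ble a q = decide (a ≤ q) := by
      rw [Bool.eq_iff_iff, decide_eq_true_iff, Nat.ble_eq]
    have h2 : Nat.ble b q = decide (b ≤ q) := by
      rw [Bool.eq_iff_iff, decide_eq_true_iff, Nat.ble_eq]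
    rw [h1, h2]
    by_cases ha : a ≤ q <;> by_cases hb : b ≤ q
    · have : ¬ (q < b) := by omega
      simp [ha, hb, this]
    · have : q < b := by omega
      simp [ha, hb, this]
    · simp [ha]
    · simp [ha]

theorem card_le_of_list (T : Finset ℕ) (l : List ℕ) (h : ∀ x ∈ T, x ∈ l) : T.card ≤ l.length := by
  calc T.card ≤ l.toFinset.card := Finset.card_le_card (fun x hx => by simpa using h x hx)
    _ ≤ l.length := l.toFinset_card_le

theorem min9_spec (n : ℕ) : min9 n = min n 9 := by
  unfold min9
  cases h : Nat.ble 9 n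
  · have : ¬ 9 ≤ n := by rw [← Nat.ble_eq, h]; simp
    simp; omega
  · have := Nat.le_of_ble_eq_true h
    simp; omega

theorem code3 (S : Finset ℕ) (hS : CodeCap S)
    (hF : ∀ x ∈ [0, 1, 3, 9, 15, 16, 19, 25, 26, 27], x ∈ S)
    (hA : ∀ x ∈ S, x < 27 → x ∈ [0, 1, 3, 9, 15, 16, 19, 25, 26])
    (hc9 : (S.filter fun x => 27 ≤ x ∧ x < 54).card ≤ 9)
    (hb9 : (S.filter fun x => 54 ≤ x ∧ x < 81).card ≤ 9)
    (hb : 6 ≤ (S.filter fun x => 54 ≤ x ∧ x < 81).card)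
    (hbc : 11 ≤ (S.filter fun x => 54 ≤ x ∧ x < 81).card +
      (S.filter fun x => 27 ≤ x ∧ x < 54).card) :
    ∃ a < 81, a ∉ S ∧ ∀ x ∈ S, third a x ∈ S := by
  refine start_sound S hS _ (go leaf3 81) ?_ _ _ _ _ hF search3 (by simp) ?_ ?_
  · refine go_sound leaf3 S hS _ ?_ 81
    intro I U1 U2 hs hI
    unfold leaf3 at hs
    rw [force_eq, force_eq] at hs
    have hcle : (S.filter fun x => 27 ≤ x ∧ x < 54).card ≤ cnt 27 54 I + U1.length := by
      rw [cnt_spec, ← List.length_append]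
      apply card_le_of_list
      intro x hx
      rw [Finset.mem_filter] at hx
      rcases hI.2.1 x hx.1 hx.2.2 with h | h
      · exact List.mem_append_left _ (List.mem_filter.2 ⟨h, by simpa using hx.2⟩)
      · exact List.mem_append_right _ h
    have hble : (S.filter fun x => 54 ≤ x ∧ x < 81).card ≤ cnt 54 81 I + U2.length := by
      rw [cnt_spec, ← List.length_append]
      apply card_le_of_list
      intro x hx
      rw [Finset.mem_filter] at hx
      rcases hI.2.2 x hx.1 hx.2.1 with h | h
      · exact List.mem_append_left _ (List.mem_filter.2 ⟨h, by simpa using hx.2⟩)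
      · exact List.mem_append_right _ h
    have t1 : Nat.ble 6 (Nat.add (cnt 54 81 I) U2.length) = true := by
      rw [Nat.ble_eq]; exact hb.trans hble
    have t2 : Nat.ble 11 (Nat.add (min9 (Nat.add (cnt 54 81 I) U2.length))
        (min9 (Nat.add (cnt 27 54 I) U1.length))) = true := by
      rw [Nat.ble_eq, min9_spec, min9_spec]
      change 11 ≤ min (cnt 54 81 I + U2.length) 9 + min (cnt 27 54 I + U1.length) 9
      omega
    rw [t1, t2] at hs
    simp only [Bool.and_eq_true, List.isEmpty_iff] at hs
    obtain ⟨rfl, rfl, hs⟩ := hs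
    rw [List.any_eq_true] at hs
    obtain ⟨a, ha, hs⟩ := hs
    unfold isAnchor at hs
    rw [Bool.and_eq_true, memb_false, List.all_eq_true] at hs
    have hSI : ∀ x ∈ S, x ∈ I := by
      intro x hx
      by_cases h : x < 54
      · simpa using hI.2.1 x hx h
      · simpa using hI.2.2 x hx (by omega)
    refine ⟨a, List.mem_range.1 ha, fun h => hs.1 (hSI a h), fun x hx => ?_⟩
    exact hI.1 _ ((memb_iff _ _).1 (hs.2 x (hSI x hx)))
  · intro x hx hl
    by_cases h : x < 27
    · left
      have := hA x hx h
      simp only [List.mem_cons] at this ⊢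
      tauto
    · by_cases h' : x = 27
      · left; simp [h']
      · right; right
        rw [List.mem_range'_1]; omega
  · intro x hx hl
    right; right
    have := hS.1 x hx
    rw [List.mem_range'_1]; omega

theorem code2 (S : Finset ℕ) (hS : CodeCap S) (h27 : ∀ x ∈ S, x < 27)
    (hF : ∀ x ∈ [0, 1, 3, 9], x ∈ S) (h9 : 9 ≤ S.card) :
    S.card = 9 ∧ ∃ p ∈ S, ∃ q ∈ S, p ∉ [0, 1, 2] ∧
      q ∉ [0, 1, 2, p, addc p 1, addc p 2, negc p, addc (negc p) 1, addc (negc p) 2] ∧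
      ∀ x ∈ [addc q (negc p), addc (addc q (negc p)) 1, addc (negc q) 1, addc (third q p) 1,
        addc (third q p) 2], x ∈ S := by
  refine start_sound S hS _ (go leaf2 81) ?_ _ _ _ _ hF search2 (by simp) ?_ ?_
  · refine go_sound leaf2 S hS _ ?_ 81
    intro I U1 U2 hs hI
    unfold leaf2 at hs
    have hle : S.card ≤ I.length + (U1.length + U2.length) := by
      rw [← List.length_append, ← List.length_append]
      apply card_le_of_list
      intro x hx
      rcases hI.2.1 x hx (by have := h27 x hx; omega) with h | h
      · exact List.mem_append_left _ h
      · exact List.mem_append_right _ (List.mem_append_left _ h)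
    have t1 : Nat.ble 9 (Nat.add I.length (Nat.add U1.length U2.length)) = true := by
      rw [Nat.ble_eq]; exact h9.trans hle
    rw [t1] at hs
    simp only [Bool.and_eq_true, List.isEmpty_iff] at hs
    obtain ⟨rfl, rfl, hl, hs⟩ := hs
    have hl := Nat.eq_of_beq_eq_true hl
    simp only [List.length_nil] at hle
    refine ⟨by omega, ?_⟩
    rw [List.any_eq_true] at hs
    obtain ⟨p, hp, hs⟩ := hs
    rw [List.any_eq_true] at hs
    obtain ⟨q, hq, hs⟩ := hs
    unfold canonAt at hs
    rw [Bool.and_eq_true, Bool.and_eq_true, memb_false, memb_false, List.all_eq_true] at hs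
    exact ⟨p, hI.1 p hp, q, hI.1 q hq, hs.1, hs.2.1,
      fun x hx => hI.1 x ((memb_iff _ _).1 (hs.2.2 x hx))⟩
  · intro x hx hl
    have := h27 x hx
    simp only [List.mem_append, List.mem_range'_1, List.mem_cons, List.not_mem_nil]
    omega
  · intro x hx hl
    have := h27 x hx
    omega

/-! ### Points and codes -/

/-- The point with a given code. -/
def dec (n : ℕ) : Fin 4 → ZMod 3 :=
  ![((n / 27 : ℕ) : ZMod 3), ((n / 9 : ℕ) : ZMod 3), ((n / 3 : ℕ) : ZMod 3), (n : ZMod 3)]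

theorem vec4_ext {x y : Fin 4 → ZMod 3} (h0 : x 0 = y 0) (h1 : x 1 = y 1) (h2 : x 2 = y 2)
    (h3 : x 3 = y 3) : x = y := by
  funext i
  fin_cases i
  · exact h0
  · exact h1
  · exact h2
  · exact h3

theorem cast_sum_zero {a b c : ℕ} (h : (a + b + c) % 3 = 0) :
    (a : ZMod 3) = -((b : ZMod 3) + (c : ZMod 3)) := by
  have : ((a + b + c : ℕ) : ZMod 3) = 0 :=
    (ZMod.natCast_eq_zero_iff _ _).2 (Nat.dvd_of_mod_eq_zero h)
  push_cast at this
  linear_combination this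

theorem dec_third (p q : ℕ) (hp : p < 81) (hq : q < 81) :
    dec (third p q) = -(dec p + dec q) := by
  obtain ⟨h0, h1, h2, h3, h4⟩ := third_facts p q hp hq
  exact vec4_ext (cast_sum_zero h1) (cast_sum_zero h2) (cast_sum_zero h3) (cast_sum_zero h4)

theorem dec_inj {p q : ℕ} (hp : p < 81) (hq : q < 81) (h : dec p = dec q) : p = q := by
  have h0 : p / 27 % 3 = q / 27 % 3 := (ZMod.natCast_eq_natCast_iff' _ _ _).1 (congrFun h 0)
  have h1 : p / 9 % 3 = q / 9 % 3 := (ZMod.natCast_eq_natCast_iff' _ _ _).1 (congrFun h 1)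
  have h2 : p / 3 % 3 = q / 3 % 3 := (ZMod.natCast_eq_natCast_iff' _ _ _).1 (congrFun h 2)
  have h3 : p % 3 = q % 3 := (ZMod.natCast_eq_natCast_iff' _ _ _).1 (congrFun h 3)
  omega

theorem dec_surj (v : Fin 4 → ZMod 3) : ∃ n < 81, dec n = v := by
  have key : ∀ (a : ZMod 3) (n : ℕ), n % 3 = a.val → (n : ZMod 3) = a := by
    intro a n h
    rw [← ZMod.natCast_zmod_val a, ZMod.natCast_eq_natCast_iff', h,
      Nat.mod_eq_of_lt (ZMod.val_lt a)]
  have a0 := ZMod.val_lt (v 0)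
  have a1 := ZMod.val_lt (v 1)
  have a2 := ZMod.val_lt (v 2)
  have a3 := ZMod.val_lt (v 3)
  refine ⟨27 * (v 0).val + 9 * (v 1).val + 3 * (v 2).val + (v 3).val, by omega, ?_⟩
  refine vec4_ext (key _ _ ?_) (key _ _ ?_) (key _ _ ?_) (key _ _ ?_) <;> omega

theorem dec_zero : dec 0 = 0 := by decide

theorem addc_lt (p q : ℕ) (hp : p < 81) (hq : q < 81) : addc p q < 81 :=
  (third_facts _ 0 (third_facts p q hp hq).1 (by norm_num)).1

theorem negc_lt (p : ℕ) (hp : p < 81) : negc p < 81 :=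
  (third_facts p 0 hp (by norm_num)).1

theorem dec_addc (p q : ℕ) (hp : p < 81) (hq : q < 81) : dec (addc p q) = dec p + dec q := by
  unfold addc
  rw [dec_third _ _ (third_facts p q hp hq).1 (by norm_num), dec_third _ _ hp hq, dec_zero]
  abel

theorem dec_negc (p : ℕ) (hp : p < 81) : dec (negc p) = -dec p := by
  unfold negc
  rw [dec_third _ _ hp (by norm_num), dec_zero, add_zero]

/-! ### Affine frames -/

/-- The linear map attached to four vectors. -/
def lin (w v3 v2 v1 : Fin 4 → ZMod 3) (c : Fin 4 → ZMod 3) : Fin 4 → ZMod 3 :=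
  c 0 • w + c 1 • v3 + c 2 • v2 + c 3 • v1

theorem lin_add (w v3 v2 v1 c d : Fin 4 → ZMod 3) :
    lin w v3 v2 v1 (c + d) = lin w v3 v2 v1 c + lin w v3 v2 v1 d := by
  simp only [lin, Pi.add_apply]; module

theorem lin_smul (w v3 v2 v1 c : Fin 4 → ZMod 3) (a : ZMod 3) :
    lin w v3 v2 v1 (a • c) = a • lin w v3 v2 v1 c := by
  simp only [lin, Pi.smul_apply, smul_eq_mul]; module

theorem lin_neg (w v3 v2 v1 c : Fin 4 → ZMod 3) :
    lin w v3 v2 v1 (-c) = - lin w v3 v2 v1 c := by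
  simp only [lin, Pi.neg_apply]; module

/-- The vectors `v1, v2, v3` are independent in the kernel of `f`. -/
structure Indep (f v3 v2 v1 : Fin 4 → ZMod 3) : Prop where
  f1 : f ⬝ᵥ v1 = 0
  f2 : f ⬝ᵥ v2 = 0
  f3 : f ⬝ᵥ v3 = 0
  i1 : v1 ≠ 0
  i2 : ∀ a : ZMod 3, v2 ≠ a • v1
  i3 : ∀ a b : ZMod 3, v3 ≠ a • v1 + b • v2

theorem dot_lin (f w v3 v2 v1 c : Fin 4 → ZMod 3) (h : Indep f v3 v2 v1) :
    f ⬝ᵥ lin w v3 v2 v1 c = c 0 * (f ⬝ᵥ w) := by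
  simp [lin, dotProduct_add, dotProduct_smul, h.f1, h.f2, h.f3]

theorem lin_inj (f w v3 v2 v1 : Fin 4 → ZMod 3) (h : Indep f v3 v2 v1) (hw : f ⬝ᵥ w ≠ 0) :
    Function.Injective (lin w v3 v2 v1) := by
  have key : ∀ c, lin w v3 v2 v1 c = 0 → c = 0 := by
    intro c hc
    have h0 : c 0 = 0 := by
      have := dot_lin f w v3 v2 v1 c h
      rw [hc, dotProduct_zero] at this
      exact (mul_eq_zero.1 this.symm).resolve_right hw
    have h1 : c 1 = 0 := by
      by_contra hne
      apply h.i3 (-(c 1)⁻¹ * c 3) (-(c 1)⁻¹ * c 2)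
      have e : c 1 • v3 = -(c 3 • v1 + c 2 • v2) := by
        rw [← add_eq_zero_iff_eq_neg]
        rw [lin, h0] at hc
        rw [← hc]; module
      calc v3 = (c 1)⁻¹ • (c 1 • v3) := by rw [smul_smul, inv_mul_cancel₀ hne, one_smul]
        _ = _ := by rw [e]; module
    have h2 : c 2 = 0 := by
      by_contra hne
      apply h.i2 (-(c 2)⁻¹ * c 3)
      have e : c 2 • v2 = -(c 3 • v1) := by
        rw [← add_eq_zero_iff_eq_neg]
        rw [lin, h0, h1] at hc
        rw [← hc]; module
      calc v2 = (c 2)⁻¹ • (c 2 • v2) := by rw [smul_smul, inv_mul_cancel₀ hne, one_smul]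
        _ = _ := by rw [e]; module
    have h3 : c 3 = 0 := by
      rw [lin, h0, h1, h2] at hc
      simp only [zero_smul, zero_add] at hc
      exact (smul_eq_zero.1 hc).resolve_right h.i1
    exact vec4_ext h0 h1 h2 h3
  intro c d hcd
  have : lin w v3 v2 v1 (c + -d) = 0 := by rw [lin_add, lin_neg, hcd]; abel
  have := key _ this
  rwa [← sub_eq_add_neg, sub_eq_zero] at this

/-- The codes of the points of `S` in the frame `p0, w, v3, v2, v1`. -/
def codeSet (S : Finset (Fin 4 → ZMod 3)) (p0 w v3 v2 v1 : Fin 4 → ZMod 3) : Finset ℕ :=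
  (Finset.range 81).filter fun n => p0 + lin w v3 v2 v1 (dec n) ∈ S

theorem mem_codeSet {S : Finset (Fin 4 → ZMod 3)} {p0 w v3 v2 v1 : Fin 4 → ZMod 3} {n : ℕ} :
    n ∈ codeSet S p0 w v3 v2 v1 ↔ n < 81 ∧ p0 + lin w v3 v2 v1 (dec n) ∈ S := by
  simp [codeSet]

theorem three_smul_zero (x : Fin 4 → ZMod 3) : x + x + x = 0 := by
  have : x + x + x = (3 : ZMod 3) • x := by module
  rw [this]
  have h3 : (3 : ZMod 3) = 0 := by decide
  rw [h3, zero_smul]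

theorem pt_third (p0 w v3 v2 v1 : Fin 4 → ZMod 3) {p q : ℕ} (hp : p < 81) (hq : q < 81) :
    p0 + lin w v3 v2 v1 (dec (third p q)) =
      -((p0 + lin w v3 v2 v1 (dec p)) + (p0 + lin w v3 v2 v1 (dec q))) := by
  rw [dec_third p q hp hq, lin_neg, lin_add]
  have := three_smul_zero p0
  rw [← sub_eq_zero]
  rw [← this]; abel

theorem codeSet_cap {S : Finset (Fin 4 → ZMod 3)} (hS : IsCap S)
    {f p0 w v3 v2 v1 : Fin 4 → ZMod 3} (h : Indep f v3 v2 v1) (hw : f ⬝ᵥ w ≠ 0) :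
    CodeCap (codeSet S p0 w v3 v2 v1) := by
  refine ⟨fun p hp => (mem_codeSet.1 hp).1, ?_⟩
  intro p hp q hq hpq hr
  rw [mem_codeSet] at hp hq hr
  have hinj := lin_inj f w v3 v2 v1 h hw
  have e := pt_third p0 w v3 v2 v1 hp.1 hq.1
  have hne : p0 + lin w v3 v2 v1 (dec p) ≠ p0 + lin w v3 v2 v1 (dec q) := by
    intro e'
    exact hpq (dec_inj hp.1 hq.1 (hinj (add_left_cancel e')))
  refine hS _ hp.2 _ hq.2 _ hr.2 hne ?_ ?_ ?_
  · rw [e]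
    intro e'
    apply hne
    have h3 := three_smul_zero (p0 + lin w v3 v2 v1 (dec p))
    nth_rewrite 3 [e'] at h3
    rw [← sub_eq_zero, ← h3]; abel
  · rw [e]
    intro e'
    apply hne
    have h3 := three_smul_zero (p0 + lin w v3 v2 v1 (dec q))
    nth_rewrite 3 [e'] at h3
    rw [eq_comm, ← sub_eq_zero, ← h3]; abel
  · rw [e]; abel

theorem exists_code {f w v3 v2 v1 : Fin 4 → ZMod 3} (p0 : Fin 4 → ZMod 3)
    (h : Indep f v3 v2 v1) (hw : f ⬝ᵥ w ≠ 0) (x : Fin 4 → ZMod 3) :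
    ∃ n < 81, p0 + lin w v3 v2 v1 (dec n) = x := by
  obtain ⟨c, hc⟩ := Finite.surjective_of_injective (lin_inj f w v3 v2 v1 h hw) (x - p0)
  obtain ⟨n, hn, e⟩ := dec_surj c
  exact ⟨n, hn, by rw [e, hc]; abel⟩

/-- Level sets of a functional correspond to ranges of codes. -/
theorem card_layer_le {S : Finset (Fin 4 → ZMod 3)} {f p0 w v3 v2 v1 : Fin 4 → ZMod 3}
    (h : Indep f v3 v2 v1) (hw : f ⬝ᵥ w ≠ 0) (i : ℕ) (hi : i < 3) :
    (S.filter fun x => f ⬝ᵥ x = f ⬝ᵥ p0 + (i : ZMod 3) * (f ⬝ᵥ w)).card =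
      ((codeSet S p0 w v3 v2 v1).filter fun n => 27 * i ≤ n ∧ n < 27 * i + 27).card := by
  have hinj := lin_inj f w v3 v2 v1 h hw
  symm
  apply Finset.card_bij (fun n _ => p0 + lin w v3 v2 v1 (dec n))
  · intro n hn
    rw [Finset.mem_filter, mem_codeSet] at hn
    rw [Finset.mem_filter]
    refine ⟨hn.1.2, ?_⟩
    rw [dotProduct_add, dot_lin _ _ _ _ _ _ h]
    have : n / 27 = i := by omega
    have : dec n 0 = (i : ZMod 3) := by rw [← this]; rfl
    rw [this]
  · intro n hn m hm e
    rw [Finset.mem_filter, mem_codeSet] at hn hm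
    exact dec_inj hn.1.1 hm.1.1 (hinj (add_left_cancel e))
  · intro x hx
    rw [Finset.mem_filter] at hx
    obtain ⟨n, hn, e⟩ := exists_code p0 h hw x
    refine ⟨n, ?_, e⟩
    rw [Finset.mem_filter, mem_codeSet]
    refine ⟨⟨hn, by rw [e]; exact hx.1⟩, ?_⟩
    have h2 := hx.2
    rw [← e, dotProduct_add, dot_lin _ _ _ _ _ _ h] at h2
    have h3 : dec n 0 = (i : ZMod 3) := mul_right_cancel₀ hw (add_left_cancel h2)
    have h4 : n / 27 % 3 = i % 3 := (ZMod.natCast_eq_natCast_iff' _ _ _).1 h3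
    omega

theorem zmod3_cases (a : ZMod 3) : a = 0 ∨ a = 1 ∨ a = -1 := by
  revert a; decide

theorem exists_frame {S : Finset (Fin 4 → ZMod 3)} (hS : IsCap S) (f : Fin 4 → ZMod 3)
    (k : ZMod 3) (h7 : 7 ≤ (S.filter fun x => f ⬝ᵥ x = k).card) :
    ∃ p0 v3 v2 v1, f ⬝ᵥ p0 = k ∧ Indep f v3 v2 v1 ∧ p0 ∈ S ∧ p0 + v1 ∈ S ∧ p0 + v2 ∈ S ∧
      p0 + v3 ∈ S := by
  classical
  set A := S.filter fun x => f ⬝ᵥ x = k with hA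
  have hAS : ∀ x ∈ A, x ∈ S ∧ f ⬝ᵥ x = k := fun x hx => by simpa [hA] using hx
  obtain ⟨p0, hp0⟩ : A.Nonempty := Finset.card_pos.1 (by omega)
  obtain ⟨p1, hp1, hp1'⟩ : ∃ p ∈ A, p ∉ ({p0} : Finset (Fin 4 → ZMod 3)) :=
    Finset.exists_mem_notMem_of_card_lt_card (by rw [Finset.card_singleton]; omega)
  obtain ⟨p2, hp2, hp2'⟩ : ∃ p ∈ A, p ∉ ({p0, p1} : Finset (Fin 4 → ZMod 3)) :=
    Finset.exists_mem_notMem_of_card_lt_card (lt_of_le_of_lt Finset.card_le_two (by omega))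
  simp only [Finset.mem_singleton, Finset.mem_insert, not_or] at hp1' hp2'
  have hf : ∀ x ∈ A, f ⬝ᵥ (x - p0) = 0 := by
    intro x hx
    rw [dotProduct_sub, (hAS x hx).2, (hAS p0 hp0).2, sub_self]
  have i1 : p1 - p0 ≠ 0 := sub_ne_zero.2 hp1'
  have i2 : ∀ a : ZMod 3, p2 - p0 ≠ a • (p1 - p0) := by
    intro a e
    rcases zmod3_cases a with rfl | rfl | rfl
    · rw [zero_smul, sub_eq_zero] at e; exact hp2'.1 e
    · rw [one_smul] at e; exact hp2'.2 (sub_left_injective e)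
    · refine hS _ (hAS p0 hp0).1 _ (hAS p1 hp1).1 _ (hAS p2 hp2).1 (Ne.symm hp1')
        (Ne.symm hp2'.1) (Ne.symm hp2'.2) ?_
      have e2 : p2 = p0 + -(p1 - p0) := by
        rw [← sub_eq_iff_eq_add', e]; module
      rw [e2, ← three_smul_zero p0]; abel
  by_cases h3 : ∃ p3 ∈ A, ∀ a b : ZMod 3, p3 - p0 ≠ a • (p1 - p0) + b • (p2 - p0)
  · obtain ⟨p3, hp3, i3⟩ := h3
    refine ⟨p0, p3 - p0, p2 - p0, p1 - p0, (hAS p0 hp0).2,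
      ⟨hf _ hp1, hf _ hp2, hf _ hp3, i1, i2, i3⟩, (hAS p0 hp0).1, ?_, ?_, ?_⟩
    · rw [add_sub_cancel]; exact (hAS p1 hp1).1
    · rw [add_sub_cancel]; exact (hAS p2 hp2).1
    · rw [add_sub_cancel]; exact (hAS p3 hp3).1
  · exfalso
    push Not at h3
    let g : ZMod 3 × ZMod 3 → (Fin 4 → ZMod 3) :=
      fun t => p0 + (t.1 • (p1 - p0) + t.2 • (p2 - p0))
    let E : Finset (ZMod 3 × ZMod 3) := Finset.univ.filter fun t => g t ∈ A
    have hAE : A ⊆ E.image g := by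
      intro x hx
      obtain ⟨a, b, e⟩ := h3 x hx
      have : g (a, b) = x := by
        change p0 + (a • (p1 - p0) + b • (p2 - p0)) = x
        rw [← e]; abel
      exact Finset.mem_image.2 ⟨(a, b), by simp [E, this, hx], this⟩
    have hE : 7 ≤ E.card := h7.trans ((Finset.card_le_card hAE).trans Finset.card_image_le)
    have hEc : Eᶜ.card ≤ 2 := by
      have h9 : Fintype.card (ZMod 3 × ZMod 3) = 9 := by decide
      have := Finset.card_compl E
      omega
    obtain ⟨b, -, hb⟩ : ∃ b ∈ (Finset.univ : Finset (ZMod 3)), b ∉ Eᶜ.image Prod.snd :=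
      Finset.exists_mem_notMem_of_card_lt_card
        (lt_of_le_of_lt (Finset.card_image_le.trans hEc) (by decide))
    have hall : ∀ a, g (a, b) ∈ S := by
      intro a
      by_contra hn
      apply hb
      refine Finset.mem_image.2 ⟨(a, b), ?_, rfl⟩
      rw [Finset.mem_compl]
      intro hm
      exact hn (hAS _ (Finset.mem_filter.1 hm).2).1
    have hginj : ∀ a a', g (a, b) = g (a', b) → a = a' := by
      intro a a' e
      have : (a - a') • (p1 - p0) = 0 := by
        have := add_right_cancel (add_left_cancel e)
        rw [sub_smul, this, sub_self]
      exact sub_eq_zero.1 ((smul_eq_zero.1 this).resolve_right i1)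
    refine hS _ (hall 0) _ (hall 1) _ (hall (-1)) (fun e => ?_) (fun e => ?_) (fun e => ?_) ?_
    · exact absurd (hginj _ _ e) (by decide)
    · exact absurd (hginj _ _ e) (by decide)
    · exact absurd (hginj _ _ e) (by decide)
    · have := three_smul_zero (p0 + b • (p2 - p0))
      rw [← this]
      simp only [g]
      module

set_option maxHeartbeats 2000000 in
theorem nine {S : Finset (Fin 4 → ZMod 3)} (hS : IsCap S) (f : Fin 4 → ZMod 3) (hf : f ≠ 0)
    (k : ZMod 3) (h9 : 9 ≤ (S.filter fun x => f ⬝ᵥ x = k).card) :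
    (S.filter fun x => f ⬝ᵥ x = k).card = 9 ∧
    ∃ p0 v3 v2 v1, f ⬝ᵥ p0 = k ∧ Indep f v3 v2 v1 ∧
      ∀ w, ∀ n ∈ [0, 1, 3, 9, 15, 16, 19, 25, 26], p0 + lin w v3 v2 v1 (dec n) ∈ S := by
  obtain ⟨p0, v3, v2, v1, hk, hI, m0, m1, m2, m3⟩ := exists_frame hS f k (by omega)
  obtain ⟨w, hw⟩ : ∃ w, f ⬝ᵥ w ≠ 0 := by
    obtain ⟨i, hi⟩ := Function.ne_iff.1 hf
    exact ⟨Pi.single i 1, by rw [dotProduct_single_one]; exact hi⟩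
  have hinj := lin_inj f w v3 v2 v1 hI hw
  have hcap := codeSet_cap hS (p0 := p0) hI hw
  have hcard := card_layer_le (S := S) (p0 := p0) hI hw 0 (by norm_num)
  rw [Nat.cast_zero, zero_mul, add_zero, hk] at hcard
  set T := (codeSet S p0 w v3 v2 v1).filter fun n => 27 * 0 ≤ n ∧ n < 27 * 0 + 27 with hT
  have hmem : ∀ n, n ∈ T ↔ n < 27 ∧ p0 + lin w v3 v2 v1 (dec n) ∈ S := by
    intro n
    rw [hT, Finset.mem_filter, mem_codeSet]
    constructor
    · rintro ⟨⟨h1, h2⟩, h3⟩; exact ⟨by omega, h2⟩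
    · rintro ⟨h1, h2⟩; exact ⟨⟨by omega, h2⟩, by omega⟩
  have hTcap : CodeCap T :=
    ⟨fun p hp => hcap.1 p (Finset.mem_filter.1 hp).1, fun p hp q hq hpq hr =>
      hcap.2 p (Finset.mem_filter.1 hp).1 q (Finset.mem_filter.1 hq).1 hpq
        (Finset.mem_filter.1 hr).1⟩
  have d1 : dec 1 = ![0, 0, 0, 1] := by decide
  have d2 : dec 2 = - dec 1 := by decide
  have d3 : dec 3 = ![0, 0, 1, 0] := by decide
  have d9 : dec 9 = ![0, 1, 0, 0] := by decide
  have d15 : dec 15 = ![0, 1, -1, 0] := by decide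
  have d16 : dec 16 = ![0, 1, -1, 1] := by decide
  have d19 : dec 19 = ![0, -1, 0, 1] := by decide
  have d25 : dec 25 = ![0, -1, -1, 1] := by decide
  have d26 : dec 26 = ![0, -1, -1, -1] := by decide
  have lmk : ∀ w v3 v2 v1 : Fin 4 → ZMod 3, ∀ a b c d : ZMod 3,
    lin w v3 v2 v1 ![a, b, c, d] = a • w + b • v3 + c • v2 + d • v1 := fun _ _ _ _ _ _ _ _ => rfl
  have l1 : lin w v3 v2 v1 (dec 1) = v1 := by rw [d1, lmk]; module
  have l1s : ∀ a : ZMod 3, a • v1 = lin w v3 v2 v1 (a • dec 1) := by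
    intro a; rw [lin_smul, l1]
  have hF : ∀ x ∈ [0, 1, 3, 9], x ∈ T := by
    intro x hx
    rw [hmem]
    simp only [List.mem_cons, List.not_mem_nil, or_false] at hx
    rcases hx with rfl | rfl | rfl | rfl
    · refine ⟨by norm_num, ?_⟩
      have : p0 + lin w v3 v2 v1 (dec 0) = p0 := by
        rw [dec_zero, lin]; simp
      rwa [this]
    · exact ⟨by norm_num, by rwa [l1]⟩
    · refine ⟨by norm_num, ?_⟩
      have : lin w v3 v2 v1 (dec 3) = v2 := by rw [d3, lmk]; module
      rwa [this]
    · refine ⟨by norm_num, ?_⟩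
      have : lin w v3 v2 v1 (dec 9) = v3 := by rw [d9, lmk]; module
      rwa [this]
  obtain ⟨c9, p, hp, q, hq, hp', hq', hc⟩ := code2 T hTcap (fun x hx => ((hmem x).1 hx).1) hF
    (by omega)
  refine ⟨by omega, p0, lin w v3 v2 v1 (dec q), lin w v3 v2 v1 (dec p), v1, hk, ?_, ?_⟩
  · have p27 := ((hmem p).1 hp).1
    have q27 := ((hmem q).1 hq).1
    have p81 : p < 81 := by omega
    have q81 : q < 81 := by omega
    have np := negc_lt p p81
    have f0 : ∀ n < 27, f ⬝ᵥ lin w v3 v2 v1 (dec n) = 0 := by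
      intro n hn
      rw [dot_lin _ _ _ _ _ _ hI]
      have h0 : n / 27 = 0 := by omega
      have : dec n 0 = 0 := by
        change ((n / 27 : ℕ) : ZMod 3) = 0
        rw [h0]; rfl
      rw [this, zero_mul]
    simp only [List.mem_cons, List.not_mem_nil, or_false, not_or] at hp' hq'
    refine ⟨hI.f1, f0 p p27, f0 q q27, hI.i1, ?_, ?_⟩
    · intro a e
      rw [l1s] at e
      have e := hinj e
      rcases zmod3_cases a with rfl | rfl | rfl
      · rw [zero_smul, ← dec_zero] at e
        exact hp'.1 (dec_inj p81 (by norm_num) e)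
      · rw [one_smul] at e
        exact hp'.2.1 (dec_inj p81 (by norm_num) e)
      · rw [neg_smul, one_smul, ← d2] at e
        exact hp'.2.2 (dec_inj p81 (by norm_num) e)
    · intro a b e
      rw [l1s, ← lin_smul, ← lin_add] at e
      have e := hinj e
      obtain ⟨g1, g2, g3, g4, g5, g6, g7, g8, g9⟩ := hq'
      rcases zmod3_cases b with rfl | rfl | rfl
      · rw [zero_smul, add_zero] at e
        rcases zmod3_cases a with rfl | rfl | rfl
        · rw [zero_smul, ← dec_zero] at e
          exact g1 (dec_inj q81 (by norm_num) e)
        · rw [one_smul] at e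
          exact g2 (dec_inj q81 (by norm_num) e)
        · rw [neg_smul, one_smul, ← d2] at e
          exact g3 (dec_inj q81 (by norm_num) e)
      · rw [one_smul] at e
        rcases zmod3_cases a with rfl | rfl | rfl
        · rw [zero_smul, zero_add] at e
          exact g4 (dec_inj q81 p81 e)
        · rw [one_smul, add_comm, ← dec_addc _ _ p81 (by norm_num)] at e
          exact g5 (dec_inj q81 (addc_lt _ _ p81 (by norm_num)) e)
        · rw [neg_smul, one_smul, ← d2, add_comm, ← dec_addc _ _ p81 (by norm_num)] at e
          exact g6 (dec_inj q81 (addc_lt _ _ p81 (by norm_num)) e)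
      · rw [neg_smul (1 : ZMod 3) (dec p), one_smul (ZMod 3) (dec p), ← dec_negc _ p81] at e
        rcases zmod3_cases a with rfl | rfl | rfl
        · rw [zero_smul, zero_add] at e
          exact g7 (dec_inj q81 np e)
        · rw [one_smul, add_comm, ← dec_addc _ _ np (by norm_num)] at e
          exact g8 (dec_inj q81 (addc_lt _ _ np (by norm_num)) e)
        · rw [neg_smul, one_smul, ← d2, add_comm, ← dec_addc _ _ np (by norm_num)] at e
          exact g9 (dec_inj q81 (addc_lt _ _ np (by norm_num)) e)
  · have p81 : p < 81 := by have := ((hmem p).1 hp).1; omega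
    have q81 : q < 81 := by have := ((hmem q).1 hq).1; omega
    have np := negc_lt p p81
    have nq := negc_lt q q81
    have nt := (third_facts q p q81 p81).1
    have na := addc_lt q _ q81 np
    have o1 : 1 < 81 := by norm_num
    have o2 : 2 < 81 := by norm_num
    simp only [List.mem_cons, List.not_mem_nil, or_false, forall_eq_or_imp, forall_eq] at hc
    obtain ⟨c1, c2, c3, c4, c5⟩ := hc
    have c1 := ((hmem _).1 c1).2
    have c2 := ((hmem _).1 c2).2
    have c3 := ((hmem _).1 c3).2
    have c4 := ((hmem _).1 c4).2
    have c5 := ((hmem _).1 c5).2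
    rw [dec_addc _ _ q81 np, dec_negc _ p81, lin_add, lin_neg] at c1
    rw [dec_addc _ _ na o1, dec_addc _ _ q81 np, dec_negc _ p81, lin_add, lin_add, lin_neg,
      l1] at c2
    rw [dec_addc _ _ nq o1, dec_negc _ q81, lin_add, lin_neg, l1] at c3
    rw [dec_addc _ _ nt o1, dec_third _ _ q81 p81, lin_add, lin_neg, lin_add, l1] at c4
    rw [dec_addc _ _ nt o2, dec_third _ _ q81 p81, d2, lin_add, lin_neg, lin_neg, lin_add, l1] at c5
    have hp2 := ((hmem _).1 hp).2
    have hq2 := ((hmem _).1 hq).2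
    generalize lin w v3 v2 v1 (dec p) = P at *
    generalize lin w v3 v2 v1 (dec q) = Q at *
    intro w' n hn
    simp only [List.mem_cons, List.not_mem_nil, or_false] at hn
    rcases hn with rfl | rfl | rfl | rfl | rfl | rfl | rfl | rfl | rfl
    · rw [dec_zero]; convert m0 using 1; simp [lin]
    · rw [d1, lmk]; convert m1 using 1; module
    · rw [d3, lmk]; convert hp2 using 1; module
    · rw [d9, lmk]; convert hq2 using 1; module
    · rw [d15, lmk]; convert c1 using 1; module
    · rw [d16, lmk]; convert c2 using 1; module
    · rw [d19, lmk]; convert c3 using 1; module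
    · rw [d25, lmk]; convert c4 using 1; module
    · rw [d26, lmk]; convert c5 using 1; module

/-! ### Moments -/

theorem card_ker (u : Fin 4 → ZMod 3) (hu : u ≠ 0) :
    (Finset.univ.filter fun f : Fin 4 → ZMod 3 => f ⬝ᵥ u = 0).card = 27 := by
  obtain ⟨i, hi⟩ := Function.ne_iff.1 hu
  have hshift : ∀ t : ZMod 3,
      (Finset.univ.filter fun f : Fin 4 → ZMod 3 => f ⬝ᵥ u = t).card =
      (Finset.univ.filter fun f : Fin 4 → ZMod 3 => f ⬝ᵥ u = 0).card := by
    intro t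
    apply Finset.card_bij (fun f _ => f - Pi.single i (t * (u i)⁻¹))
    · intro f hf
      simp only [Finset.mem_filter, Finset.mem_univ, true_and] at hf ⊢
      rw [sub_dotProduct, single_dotProduct, hf, mul_assoc, inv_mul_cancel₀ hi, mul_one, sub_self]
    · intro f _ g _ e
      exact sub_left_injective e
    · intro g hg
      simp only [Finset.mem_filter, Finset.mem_univ, true_and] at hg
      refine ⟨g + Pi.single i (t * (u i)⁻¹), ?_, by simp⟩
      simp only [Finset.mem_filter, Finset.mem_univ, true_and]
      rw [add_dotProduct, single_dotProduct, hg, mul_assoc, inv_mul_cancel₀ hi, mul_one, zero_add]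
  have htot : (Finset.univ : Finset (Fin 4 → ZMod 3)).card =
      ∑ t : ZMod 3, (Finset.univ.filter fun f : Fin 4 → ZMod 3 => f ⬝ᵥ u = t).card :=
    Finset.card_eq_sum_card_fiberwise (fun _ _ => Finset.mem_univ _)
  rw [Finset.sum_congr rfl (fun t _ => hshift t), Finset.sum_const, Finset.card_univ,
    Finset.card_univ] at htot
  have h81 : Fintype.card (Fin 4 → ZMod 3) = 81 := by simp [ZMod.card]
  have h3 : Fintype.card (ZMod 3) = 3 := ZMod.card 3
  rw [h81, h3, smul_eq_mul] at htot
  omega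

theorem card_ker2 (u v : Fin 4 → ZMod 3) (hu : u ≠ 0) (hv : v ≠ 0) (h1 : u + v ≠ 0)
    (h2 : u - v ≠ 0) :
    (Finset.univ.filter fun f : Fin 4 → ZMod 3 => f ⬝ᵥ u = 0 ∧ f ⬝ᵥ v = 0).card = 9 := by
  have key : ∀ s t : ZMod 3, (if s = 0 then 1 else 0) + (if t = 0 then 1 else 0) +
      (if s + t = 0 then 1 else 0) + (if s - t = 0 then 1 else 0) =
      1 + 3 * (if s = 0 ∧ t = 0 then 1 else 0 : ℕ) := by decide
  have hsum : ∑ f : Fin 4 → ZMod 3, ((if f ⬝ᵥ u = 0 then 1 else 0) + (if f ⬝ᵥ v = 0 then 1 else 0) +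
      (if f ⬝ᵥ (u + v) = 0 then 1 else 0) + (if f ⬝ᵥ (u - v) = 0 then 1 else 0)) =
      ∑ f : Fin 4 → ZMod 3, (1 + 3 * (if f ⬝ᵥ u = 0 ∧ f ⬝ᵥ v = 0 then 1 else 0 : ℕ)) := by
    refine Finset.sum_congr rfl fun f _ => ?_
    rw [dotProduct_add, dotProduct_sub]
    exact key _ _
  rw [Finset.sum_add_distrib, Finset.sum_add_distrib, Finset.sum_add_distrib,
    Finset.sum_add_distrib, ← Finset.mul_sum] at hsum
  simp only [← Finset.card_filter] at hsum
  rw [card_ker u hu, card_ker v hv, card_ker _ h1, card_ker _ h2, Finset.sum_const,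
    Finset.card_univ] at hsum
  have h81 : Fintype.card (Fin 4 → ZMod 3) = 81 := by simp [ZMod.card]
  rw [h81, smul_eq_mul] at hsum
  omega

theorem card_pair (x y : Fin 4 → ZMod 3) :
    (Finset.univ.filter fun f : Fin 4 → ZMod 3 => f ⬝ᵥ y = f ⬝ᵥ x).card =
      27 + 54 * (if y = x then 1 else 0) := by
  by_cases h : y = x
  · subst h
    have h81 : Fintype.card (Fin 4 → ZMod 3) = 81 := by simp [ZMod.card]
    simp [Finset.card_univ, h81]
  · rw [if_neg h, ← card_ker (y - x) (sub_ne_zero.2 h)]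
    simp only [dotProduct_sub, sub_eq_zero, mul_zero, add_zero]

theorem card_triple {S : Finset (Fin 4 → ZMod 3)} (hS : IsCap S) (x y z : Fin 4 → ZMod 3)
    (hx : x ∈ S) (hy : y ∈ S) (hz : z ∈ S) (hyx : y ≠ x) :
    (Finset.univ.filter fun f : Fin 4 → ZMod 3 => f ⬝ᵥ y = f ⬝ᵥ x ∧ f ⬝ᵥ z = f ⬝ᵥ x).card =
      9 + 18 * (if z = x then 1 else 0) + 18 * (if z = y then 1 else 0) := by
  by_cases h : z = x
  · subst h
    have := card_pair z y
    rw [if_neg hyx] at this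
    simp only [and_true]
    rw [this, if_pos trivial, if_neg (Ne.symm hyx)]
  · by_cases h' : z = y
    · subst h'
      have := card_pair x z
      rw [if_neg hyx] at this
      simp only [and_self]
      rw [this, if_pos trivial, if_neg hyx]
    · rw [if_neg h, if_neg h', ← card_ker2 (y - x) (z - x) (sub_ne_zero.2 hyx) (sub_ne_zero.2 h)
        ?_ ?_]
      · simp only [dotProduct_sub, sub_eq_zero, mul_zero, add_zero]
      · intro e
        apply hS x hx y hy z hz (Ne.symm hyx) (Ne.symm h) (Ne.symm h')
        have := three_smul_zero x
        calc x + y + z = (y - x + (z - x)) + (x + x + x) := by abel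
          _ = 0 := by rw [e, this, add_zero]
      · intro e
        apply h'
        have : y - z = 0 := by rw [← e]; abel
        exact (sub_eq_zero.1 this).symm

theorem fib_sum (S : Finset (Fin 4 → ZMod 3)) (f : Fin 4 → ZMod 3) (g : ZMod 3 → ℕ) :
    ∑ k : ZMod 3, (S.filter fun x => f ⬝ᵥ x = k).card * g k = ∑ x ∈ S, g (f ⬝ᵥ x) := by
  rw [← Finset.sum_fiberwise S (fun x => f ⬝ᵥ x)]
  refine Finset.sum_congr rfl fun k _ => ?_
  rw [Finset.card_eq_sum_ones, Finset.sum_mul]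
  refine Finset.sum_congr rfl fun x hx => ?_
  rw [(Finset.mem_filter.1 hx).2, one_mul]

theorem moment2 (S : Finset (Fin 4 → ZMod 3)) (hc : S.card = 20) :
    ∑ f : Fin 4 → ZMod 3, ∑ k : ZMod 3, (S.filter fun x => f ⬝ᵥ x = k).card ^ 2 = 11880 := by
  calc ∑ f : Fin 4 → ZMod 3, ∑ k : ZMod 3, (S.filter fun x => f ⬝ᵥ x = k).card ^ 2
      = ∑ f : Fin 4 → ZMod 3, ∑ x ∈ S, ∑ y ∈ S, (if f ⬝ᵥ y = f ⬝ᵥ x then 1 else 0) := by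
        refine Finset.sum_congr rfl fun f _ => ?_
        simp only [← Finset.card_filter]
        rw [← fib_sum S f fun k => (S.filter fun y => f ⬝ᵥ y = k).card]
        exact Finset.sum_congr rfl fun k _ => by ring
    _ = ∑ x ∈ S, ∑ y ∈ S, ∑ f : Fin 4 → ZMod 3, (if f ⬝ᵥ y = f ⬝ᵥ x then 1 else 0) := by
        rw [Finset.sum_comm]
        exact Finset.sum_congr rfl fun x _ => Finset.sum_comm
    _ = ∑ x ∈ S, 594 := by
        refine Finset.sum_congr rfl fun x hx => ?_
        simp only [← Finset.card_filter, card_pair]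
        rw [Finset.sum_add_distrib, ← Finset.mul_sum, Finset.sum_ite_eq', if_pos hx,
          Finset.sum_const, hc]
        rfl
    _ = 11880 := by rw [Finset.sum_const, hc]; rfl

theorem moment3 (S : Finset (Fin 4 → ZMod 3)) (hS : IsCap S) (hc : S.card = 20) :
    ∑ f : Fin 4 → ZMod 3, ∑ k : ZMod 3, (S.filter fun x => f ⬝ᵥ x = k).card ^ 3 = 93960 := by
  calc ∑ f : Fin 4 → ZMod 3, ∑ k : ZMod 3, (S.filter fun x => f ⬝ᵥ x = k).card ^ 3
      = ∑ f : Fin 4 → ZMod 3, ∑ x ∈ S, ∑ y ∈ S, ∑ z ∈ S,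
          (if f ⬝ᵥ y = f ⬝ᵥ x ∧ f ⬝ᵥ z = f ⬝ᵥ x then 1 else 0) := by
        refine Finset.sum_congr rfl fun f _ => ?_
        have hsq : ∀ k, ∑ y ∈ S, ∑ z ∈ S, (if f ⬝ᵥ y = k ∧ f ⬝ᵥ z = k then 1 else 0) =
            (S.filter fun y => f ⬝ᵥ y = k).card ^ 2 := by
          intro k
          rw [sq, Finset.card_filter, Finset.sum_mul_sum]
          refine Finset.sum_congr rfl fun y _ => Finset.sum_congr rfl fun z _ => ?_
          by_cases h1 : f ⬝ᵥ y = k <;> by_cases h2 : f ⬝ᵥ z = k <;> simp [h1, h2]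
        simp only [hsq]
        rw [← fib_sum S f fun k => (S.filter fun y => f ⬝ᵥ y = k).card ^ 2]
        exact Finset.sum_congr rfl fun k _ => by ring
    _ = ∑ x ∈ S, ∑ y ∈ S, ∑ z ∈ S, ∑ f : Fin 4 → ZMod 3,
          (if f ⬝ᵥ y = f ⬝ᵥ x ∧ f ⬝ᵥ z = f ⬝ᵥ x then 1 else 0) := by
        rw [Finset.sum_comm]
        refine Finset.sum_congr rfl fun x _ => ?_
        rw [Finset.sum_comm]
        exact Finset.sum_congr rfl fun y _ => Finset.sum_comm
    _ = ∑ x ∈ S, ∑ y ∈ S, (216 + 378 * (if y = x then 1 else 0)) := by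
        refine Finset.sum_congr rfl fun x hx => Finset.sum_congr rfl fun y hy => ?_
        simp only [← Finset.card_filter]
        by_cases h : y = x
        · subst h
          simp only [true_and, card_pair]
          rw [Finset.sum_add_distrib, ← Finset.mul_sum, Finset.sum_ite_eq', if_pos hx,
            Finset.sum_const, hc, if_pos trivial]
          rfl
        · rw [Finset.sum_congr rfl fun z hz => card_triple hS x y z hx hy hz h]
          rw [Finset.sum_add_distrib, Finset.sum_add_distrib, ← Finset.mul_sum, ← Finset.mul_sum,
            Finset.sum_ite_eq', Finset.sum_ite_eq', if_pos hx, if_pos hy,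
            Finset.sum_const, hc, if_neg h]
          rfl
    _ = ∑ x ∈ S, 4698 := by
        refine Finset.sum_congr rfl fun x hx => ?_
        rw [Finset.sum_add_distrib, ← Finset.mul_sum, Finset.sum_ite_eq', if_pos hx,
          Finset.sum_const, hc]
        rfl
    _ = 93960 := by rw [Finset.sum_const, hc]; rfl

theorem arith8 (a b c : ℤ) (ha : 0 ≤ a) (hb : 0 ≤ b) (hc : 0 ≤ c) (ha8 : a ≤ 8) (hb8 : b ≤ 8)
    (hc8 : c ≤ 8) (h : a + b + c = 20) :
    -1936 ≤ (a ^ 3 - 21 * a ^ 2) + (b ^ 3 - 21 * b ^ 2) + (c ^ 3 - 21 * c ^ 2) := by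
  obtain rfl : c = 20 - a - b := by omega
  have ha4 : 4 ≤ a := by omega
  have hb4 : 4 ≤ b := by omega
  interval_cases a <;> interval_cases b <;> omega

theorem sum_zmod3 {M : Type} [AddCommMonoid M] (g : ZMod 3 → M) :
    ∑ k : ZMod 3, g k = g 0 + g 1 + g 2 := Fin.sum_univ_three g

theorem exists_nine (S : Finset (Fin 4 → ZMod 3)) (hS : IsCap S) (hc : S.card = 20) :
    ∃ f : Fin 4 → ZMod 3, f ≠ 0 ∧ ∃ k, 9 ≤ (S.filter fun x => f ⬝ᵥ x = k).card := by
  by_contra hcon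
  push Not at hcon
  set n : (Fin 4 → ZMod 3) → ZMod 3 → ℤ :=
    fun f k => ((S.filter fun x => f ⬝ᵥ x = k).card : ℤ) with hn
  have m2 : ∑ f : Fin 4 → ZMod 3, ∑ k : ZMod 3, n f k ^ 2 = 11880 := by
    have := congrArg (Nat.cast : ℕ → ℤ) (moment2 S hc)
    push_cast at this
    exact this
  have m3 : ∑ f : Fin 4 → ZMod 3, ∑ k : ZMod 3, n f k ^ 3 = 93960 := by
    have := congrArg (Nat.cast : ℕ → ℤ) (moment3 S hS hc)
    push_cast at this
    exact this
  have tot : ∑ f : Fin 4 → ZMod 3, ∑ k : ZMod 3, (n f k ^ 3 - 21 * n f k ^ 2) = -155520 := by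
    simp only [Finset.sum_sub_distrib, ← Finset.mul_sum]
    rw [m2, m3]; norm_num
  have hsum : ∀ f, n f 0 + n f 1 + n f 2 = 20 := by
    intro f
    have := fib_sum S f fun _ => 1
    rw [sum_zmod3, Finset.sum_const, hc] at this
    simp only [mul_one, smul_eq_mul] at this
    have := congrArg (Nat.cast : ℕ → ℤ) this
    push_cast at this
    exact this
  have hz : ∑ k : ZMod 3, (n 0 k ^ 3 - 21 * n 0 k ^ 2) = -400 := by
    have h0 : n 0 0 = 20 := by
      simp [hn, hc]
    have h1 : n 0 1 = 0 := by
      simp [hn]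
    have h2 : n 0 2 = 0 := by
      have := hsum 0; omega
    rw [sum_zmod3, h0, h1, h2]; norm_num
  have hlow : ∀ f ∈ Finset.univ.erase (0 : Fin 4 → ZMod 3),
      (-1936 : ℤ) ≤ ∑ k : ZMod 3, (n f k ^ 3 - 21 * n f k ^ 2) := by
    intro f hf
    have hb : ∀ k, n f k ≤ 8 := by
      intro k
      have := hcon f (Finset.ne_of_mem_erase hf) k
      simp only [hn]; omega
    have hp : ∀ k, 0 ≤ n f k := fun k => Int.natCast_nonneg _
    rw [sum_zmod3]
    exact arith8 _ _ _ (hp _) (hp _) (hp _) (hb _) (hb _) (hb _) (hsum f)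
  have hge := Finset.card_nsmul_le_sum _ _ _ hlow
  have h80 : (Finset.univ.erase (0 : Fin 4 → ZMod 3)).card = 80 := by
    rw [Finset.card_erase_of_mem (Finset.mem_univ _), Finset.card_univ]
    have h81 : Fintype.card (Fin 4 → ZMod 3) = 81 := by simp [ZMod.card]
    rw [h81]
  rw [h80] at hge
  rw [← Finset.add_sum_erase _ _ (Finset.mem_univ (0 : Fin 4 → ZMod 3)), hz] at tot
  rw [nsmul_eq_mul] at hge
  push_cast at hge
  linarith

/-! ### Caps with twenty points -/

theorem anchor20 (S : Finset (Fin 4 → ZMod 3)) (hS : IsCap S) (hc : S.card = 20) :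
    ∃ a, a ∉ S ∧ ∀ x ∈ S, -(a + x) ∈ S := by
  obtain ⟨f, hf, k, h9⟩ := exists_nine S hS hc
  have hle : ∀ j, (S.filter fun x => f ⬝ᵥ x = j).card ≤ 9 := by
    intro j
    by_contra hcon
    have := (nine hS f hf j (by omega)).1
    omega
  obtain ⟨e9, p0, v3, v2, v1, hk, hI, hmem⟩ := nine hS f hf k h9
  have hsum : ∀ d : ZMod 3, d ≠ 0 → (S.filter fun x => f ⬝ᵥ x = k).card +
      (S.filter fun x => f ⬝ᵥ x = k + d).card + (S.filter fun x => f ⬝ᵥ x = k + 2 * d).card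
        = 20 := by
    intro d hd
    have h0 := fib_sum S f fun _ => 1
    rw [sum_zmod3, Finset.sum_const, hc] at h0
    simp only [mul_one, smul_eq_mul] at h0
    have : ∀ g : ZMod 3 → ℕ, ∀ k d : ZMod 3, d ≠ 0 →
        g k + g (k + d) + g (k + 2 * d) = g 0 + g 1 + g 2 := by
      intro g k d hd
      have hk : k = 0 ∨ k = 1 ∨ k = 2 := by revert k; decide
      have hd : d = 1 ∨ d = 2 := by revert d; decide
      have e1 : (1 : ZMod 3) + 1 = 2 := by decide
      have e2 : (1 : ZMod 3) + 2 = 0 := by decide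
      have e3 : (2 : ZMod 3) + 1 = 0 := by decide
      have e4 : (2 : ZMod 3) + 2 = 1 := by decide
      have e5 : (2 : ZMod 3) * 2 = 1 := by decide
      rcases hk with rfl | rfl | rfl <;> rcases hd with rfl | rfl <;>
        simp only [mul_one, zero_add, e1, e2, e3, e4, e5] <;> ring
    exact (this (fun j => (S.filter fun x => f ⬝ᵥ x = j).card) k d hd).trans h0
  obtain ⟨d, hd, hdd⟩ : ∃ d : ZMod 3, d ≠ 0 ∧ (S.filter fun x => f ⬝ᵥ x = k + d).card ≤
      (S.filter fun x => f ⬝ᵥ x = k + 2 * d).card := by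
    rcases le_total (S.filter fun x => f ⬝ᵥ x = k + 1).card
      (S.filter fun x => f ⬝ᵥ x = k + 2 * 1).card with h | h
    · exact ⟨1, by decide, h⟩
    · refine ⟨2, by decide, ?_⟩
      have e5 : (2 : ZMod 3) * 2 = 1 := by decide
      rw [e5]; rwa [mul_one] at h
  have hs := hsum d hd
  have hle2 := hle (k + 2 * d)
  obtain ⟨p4, hp4⟩ : (S.filter fun x => f ⬝ᵥ x = k + d).Nonempty := Finset.card_pos.1 (by omega)
  rw [Finset.mem_filter] at hp4
  obtain ⟨w, rfl⟩ : ∃ w, p4 = p0 + w := ⟨p4 - p0, by abel⟩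
  have hwd : f ⬝ᵥ w = d := by
    have := hp4.2
    rw [dotProduct_add, hk] at this
    exact add_left_cancel this
  have hw : f ⬝ᵥ w ≠ 0 := by rwa [hwd]
  have l0 := card_layer_le (S := S) (p0 := p0) hI hw 0 (by norm_num)
  have l1 := card_layer_le (S := S) (p0 := p0) hI hw 1 (by norm_num)
  have l2 := card_layer_le (S := S) (p0 := p0) hI hw 2 (by norm_num)
  rw [hk, hwd] at l0 l1 l2
  simp only [Nat.cast_zero, Nat.cast_one, Nat.cast_ofNat, zero_mul, one_mul, add_zero,
    mul_zero, mul_one, zero_add, Nat.reduceMul, Nat.reduceAdd] at l0 l1 l2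
  have hcap := codeSet_cap hS (p0 := p0) hI hw
  set C := codeSet S p0 w v3 v2 v1 with hC
  have hA0 : ∀ n ∈ [0, 1, 3, 9, 15, 16, 19, 25, 26], n < 27 := by decide
  have hAC : ∀ n ∈ [0, 1, 3, 9, 15, 16, 19, 25, 26], n ∈ C := by
    intro n hn
    rw [hC, mem_codeSet]
    exact ⟨by have := hA0 n hn; omega, hmem w n hn⟩
  have hsub : [0, 1, 3, 9, 15, 16, 19, 25, 26].toFinset ⊆ C.filter fun n => 0 ≤ n ∧ n < 27 := by
    intro n hn
    rw [List.mem_toFinset] at hn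
    exact Finset.mem_filter.2 ⟨hAC n hn, by omega, hA0 n hn⟩
  have hcard9 : ([0, 1, 3, 9, 15, 16, 19, 25, 26].toFinset : Finset ℕ).card = 9 := by decide
  have heq := Finset.eq_of_subset_of_card_le hsub (by omega)
  have d27 : dec 27 = ![1, 0, 0, 0] := by decide
  have l27 : lin w v3 v2 v1 (dec 27) = w := by
    rw [d27]
    change (1 : ZMod 3) • w + (0 : ZMod 3) • v3 + (0 : ZMod 3) • v2 + (0 : ZMod 3) • v1 = w
    module
  have h27 : 27 ∈ C := by
    rw [hC, mem_codeSet, l27]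
    exact ⟨by norm_num, hp4.1⟩
  have hle1 := hle (k + d)
  obtain ⟨a, ha, haC, hax⟩ := code3 C hcap
    (by
      intro x hx
      rw [show [0, 1, 3, 9, 15, 16, 19, 25, 26, 27] = [0, 1, 3, 9, 15, 16, 19, 25, 26] ++ [27]
        from rfl, List.mem_append, List.mem_singleton] at hx
      rcases hx with hx | rfl
      · exact hAC x hx
      · exact h27)
    (by
      intro x hx hlt
      rw [← List.mem_toFinset, heq]
      exact Finset.mem_filter.2 ⟨hx, by omega, hlt⟩)
    (by omega) (by omega) (by omega) (by omega)
  refine ⟨p0 + lin w v3 v2 v1 (dec a), fun h => haC (mem_codeSet.2 ⟨ha, h⟩), ?_⟩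
  intro x hx
  obtain ⟨n, hn, rfl⟩ := exists_code p0 hI hw x
  rw [← pt_third p0 w v3 v2 v1 ha hn]
  exact (mem_codeSet.1 (hax n (mem_codeSet.2 ⟨hn, hx⟩))).2

theorem anchor_eq (S : Finset (Fin 4 → ZMod 3)) (hc : S.card = 20) (b : Fin 4 → ZMod 3)
    (hb : ∀ x ∈ S, -(b + x) ∈ S) : b = -∑ x ∈ S, x := by
  have h : ∑ x ∈ S, x = ∑ x ∈ S, -(b + x) :=
    Finset.sum_nbij' (fun x => -(b + x)) (fun x => -(b + x)) hb hb
      (fun x _ => by abel) (fun x _ => by abel) (fun x _ => by abel)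
  rw [Finset.sum_neg_distrib, Finset.sum_add_distrib, Finset.sum_const, hc] at h
  generalize ∑ x ∈ S, x = s at h ⊢
  have hb3 := three_smul_zero b
  have hs3 := three_smul_zero s
  have h2 : (20 : ℕ) • b = b + b := by
    have : (20 : ℕ) • b = 6 • (b + b + b) + (b + b) := by abel
    rw [this, hb3]; simp
  rw [h2] at h
  have e1 : b = (b + b + b) - (b + b + s) + s := by abel
  have e2 : -s = (s + s) - (s + s + s) := by abel
  rw [hb3, zero_sub, ← h] at e1
  rw [e2, hs3, sub_zero]; exact e1

theorem anchor20' (S : Finset (Fin 4 → ZMod 3)) (hS : IsCap S) (hc : S.card = 20) :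
    (-∑ x ∈ S, x) ∉ S ∧ ∀ x ∈ S, -((-∑ y ∈ S, y) + x) ∈ S := by
  obtain ⟨a, ha, hax⟩ := anchor20 S hS hc
  rw [← anchor_eq S hc a hax]
  exact ⟨ha, hax⟩

theorem card_le_20 (D : Finset (Fin 4 → ZMod 3)) (hD : IsCap D) : D.card ≤ 20 := by
  by_contra hcon
  obtain ⟨S, hSD, hc⟩ := Finset.exists_subset_card_eq (show 21 ≤ D.card by omega)
  have hS : IsCap S := fun x hx y hy z hz => hD x (hSD hx) y (hSD hy) z (hSD hz)
  obtain ⟨s, hs⟩ : ∃ s, s = ∑ x ∈ S, x := ⟨_, rfl⟩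
  have key : ∀ x ∈ S, ∀ y ∈ S, x ≠ y → s - x - y ∈ S ∧ s - x - y ≠ x := by
    intro x hx y hy hxy
    have hcap : IsCap (S.erase x) := fun p hp q hq r hr =>
      hS p (Finset.mem_of_mem_erase hp) q (Finset.mem_of_mem_erase hq) r
        (Finset.mem_of_mem_erase hr)
    have h := (anchor20' (S.erase x) hcap (by rw [Finset.card_erase_of_mem hx, hc])).2 y
      (Finset.mem_erase.2 ⟨Ne.symm hxy, hy⟩)
    have e : ∑ z ∈ S.erase x, z = s - x := by
      rw [hs, ← Finset.add_sum_erase S _ hx]; abel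
    have e' : -(-(s - x) + y) = s - x - y := by abel
    rw [e, e', Finset.mem_erase] at h
    exact ⟨h.2, h.1⟩
  have avoid : ∀ L : Finset (Fin 4 → ZMod 3), L.card ≤ 10 → ∃ w ∈ S, w ∉ L := by
    intro L hL
    by_contra hno
    push Not at hno
    have := Finset.card_le_card (show S ⊆ L from hno)
    omega
  obtain ⟨x, hx, -⟩ := avoid ∅ (by simp)
  obtain ⟨y, hy, hyx⟩ := avoid {x} (by simp)
  rw [Finset.mem_singleton] at hyx
  have hz := key x hx y hy (Ne.symm hyx)
  have hz' := key y hy x hx hyx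
  have ez : s - y - x = s - x - y := by abel
  rw [ez] at hz'
  have hs0 : s ≠ 0 := by
    intro h0
    refine hS x hx y hy _ hz.1 (Ne.symm hyx) (Ne.symm hz.2) (Ne.symm hz'.2) ?_
    rw [h0]; abel
  obtain ⟨w, hw, hwn⟩ := avoid {x, y, s - x - y} (Finset.card_le_three.trans (by norm_num))
  simp only [Finset.mem_insert, Finset.mem_singleton, not_or] at hwn
  obtain ⟨hwx, hwy, hwz⟩ := hwn
  have hp := (key _ hz.1 w hw (Ne.symm hwz)).1
  have hv := (key w hw x hx hwx).1
  have hv' := (key w hw y hy hwy).1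
  have hq := (key _ hv _ hv' (fun e => hyx (sub_right_injective e).symm)).1
  have ep : s - (s - x - y) - w = x + y - w := by abel
  have eq : s - (s - w - x) - (s - w - y) = (x + y - w) - s := by
    have := three_smul_zero w
    rw [← sub_eq_zero, ← this]; abel
  rw [ep] at hp
  rw [eq] at hq
  generalize x + y - w = p at hp hq
  refine (key _ hq _ hp ?_).2 ?_
  · intro e
    exact hs0 (by simpa using e)
  · have h1 := three_smul_zero p
    have h2 := three_smul_zero s
    rw [← sub_eq_zero]
    calc s - (p - s) - p - (p - s) = (s + s + s) - (p + p + p) := by abel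
      _ = 0 := by rw [h1, h2, sub_zero]

/-- Codes of an explicit cap with twenty points. -/
def cap20 : List ℕ :=
  [4, 5, 7, 8, 12, 13, 24, 26, 31, 34, 40, 41, 47, 50, 59, 62, 64, 70, 79, 80]

theorem exists_cap20 : ∃ D : Finset (Fin 4 → ZMod 3), IsCap D ∧ D.card = 20 := by
  have hlt : ∀ p ∈ cap20, p < 81 := by decide
  have hcap : ∀ p ∈ cap20, ∀ q ∈ cap20, p ≠ q → third p q ∉ cap20 := by decide +kernel
  refine ⟨cap20.toFinset.image dec, ?_, ?_⟩
  · intro x hx y hy z hz hxy _ _ e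
    rw [Finset.mem_image] at hx hy hz
    obtain ⟨p, hp, rfl⟩ := hx
    obtain ⟨q, hq, rfl⟩ := hy
    obtain ⟨r, hr, rfl⟩ := hz
    rw [List.mem_toFinset] at hp hq hr
    have e2 : dec r = dec (third p q) := by
      rw [dec_third p q (hlt p hp) (hlt q hq)]
      exact (neg_eq_of_add_eq_zero_right e).symm
    have e3 := dec_inj (hlt r hr) (third_facts p q (hlt p hp) (hlt q hq)).1 e2
    refine hcap p hp q hq (fun h => hxy (by rw [h])) ?_
    rwa [← e3]
  · rw [Finset.card_image_of_injOn]
    · decide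
    · intro p hp q hq e
      rw [Finset.mem_coe, List.mem_toFinset] at hp hq
      exact dec_inj (hlt p hp) (hlt q hq) e

/-- Every maximal cap `S` in `AG(4,3)` has an anchor point `a = -∑ x ∈ S, x`: the point
`a` is not in `S`, every `x ∈ S` pairs with the point `-(a + x) ∈ S` (distinct from `x`)
to form a line through `a`, and `a` is the unique point with this property. -/
theorem maximal_cap_AG43_anchor
    (S : Finset (Fin 4 → ZMod 3)) (hS : MaximalCap S) :
    (-∑ x ∈ S, x) ∉ S ∧
    (∀ x ∈ S, (-((-∑ y ∈ S, y) + x)) ∈ S ∧ (-((-∑ y ∈ S, y) + x)) ≠ x) ∧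
    (∀ b : Fin 4 → ZMod 3,
      (b ∉ S ∧ ∀ x ∈ S, (-(b + x)) ∈ S ∧ (-(b + x)) ≠ x) → b = -∑ x ∈ S, x) := by
  obtain ⟨D, hD, hDc⟩ := exists_cap20
  have h1 := hS.2 D hD
  have h2 := card_le_20 S hS.1
  have hc : S.card = 20 := by omega
  obtain ⟨ha, hax⟩ := anchor20' S hS.1 hc
  refine ⟨ha, fun x hx => ⟨hax x hx, fun e => ha ?_⟩, fun b hb => anchor_eq S hc b
    fun x hx => (hb.2 x hx).1⟩
  have h3 := three_smul_zero x
  generalize -∑ y ∈ S, y = a at e ⊢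
  have : a = x := by
    have e4 : a + x + x = 0 := by
      nth_rewrite 2 [← e]; abel
    have e5 : a - x = (a + x + x) - (x + x + x) := by abel
    rw [e4, h3, sub_zero] at e5
    exact sub_eq_zero.1 e5
  rwa [this]
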